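/- The calculus KBeq is sound and complete for threshold 1/2 with respect to the class of epistemic probability models: for every formula φ of L_KB, KBeq ⊢ φ if and only if φ is true at every world of every epistemic probability model under the probability semantics with threshold 1/2. -/

import Mathlib

open Classical

/-- An epistemic probability model: finite nonempty world set, S5 (equivalence)
accessibility relation, valuation, and a finitely additive probability measure
with full support. -/
structure EPM (W A : Type) where
  finite : Finite W
  nonempty : Nonempty W
  R : W → W → Prop
  equiv : Equivalence R
  V : W → Set A
  P : Set W → ℝ
  nonneg : ∀ X : Set W, 0 ≤ P X
  le_one : ∀ X : Set W, P X ≤ 1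
  norm : P Set.univ = 1
  add : ∀ X Y : Set W, X ∩ Y = ∅ → P (X ∪ Y) = P X + P Y
  full : ∀ w : W, 0 < P {w}

/-- The equivalence class `[w]` of a world. -/
def EPM.cl {W A : Type} (M : EPM W A) (w : W) : Set W := {v | M.R w v}

/-- `P_w(X) := P(X ∩ [w]) / P([w])`. -/
noncomputable def EPM.Pw {W A : Type} (M : EPM W A) (w : W) (X : Set W) : ℝ :=
  M.P (X ∩ M.cl w) / M.P (M.cl w)

/-- The language `L_KB`: `φ ::= ⊤ | p | ¬φ | φ∧φ | Kφ | Bφ`. -/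
inductive Form (A : Type) : Type where
  | top : Form A
  | atom : A → Form A
  | neg : Form A → Form A
  | and : Form A → Form A → Form A
  | K : Form A → Form A
  | B : Form A → Form A

namespace Form

/-- Material implication abbreviation. -/
def imp {A : Type} (φ ψ : Form A) : Form A := Form.neg (Form.and φ (Form.neg ψ))

/-- Disjunction abbreviation. -/
def or {A : Type} (φ ψ : Form A) : Form A := Form.neg (Form.and (Form.neg φ) (Form.neg ψ))

/-- Falsehood `⊥ := ¬⊤`. -/
def bot {A : Type} : Form A := Form.neg Form.top

/-- Biconditional abbreviation. -/
def iff {A : Type} (φ ψ : Form A) : Form A := Form.and (Form.imp φ ψ) (Form.imp ψ φ)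

end Form

/-- Truth set of a formula in an epistemic probability model, for threshold `c`:
`Kφ` holds at `w` iff `P_w(⟦φ⟧) = 1`, and `Bφ` holds at `w` iff `P_w(⟦φ⟧) > c`. -/
noncomputable def psem {W A : Type} (c : ℝ) (M : EPM W A) : Form A → Set W
  | Form.top => Set.univ
  | Form.atom p => {w | p ∈ M.V w}
  | Form.neg φ => (psem c M φ)ᶜ
  | Form.and φ ψ => psem c M φ ∩ psem c M ψ
  | Form.K φ => {w | M.Pw w (psem c M φ) = 1}
  | Form.B φ => {w | c < M.Pw w (psem c M φ)}

/-- Boolean evaluation of a formula under a valuation of "atomic" formulas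
(propositional letters and formulas of the form `Kφ` or `Bφ`). -/
def evalb {A : Type} (v : Form A → Bool) : Form A → Bool
  | Form.top => true
  | Form.atom p => v (Form.atom p)
  | Form.neg φ => !(evalb v φ)
  | Form.and φ ψ => evalb v φ && evalb v ψ
  | Form.K φ => v (Form.K φ)
  | Form.B φ => v (Form.B φ)

/-- `φ` is a propositional tautology (treating `Kψ` and `Bψ` as atoms). -/
def Taut {A : Type} (φ : Form A) : Prop := ∀ v : Form A → Bool, evalb v φ = true

/-- The Hilbert calculus `KB`. -/
inductive KB {A : Type} : Form A → Prop where
  | taut {φ : Form A} : Taut φ → KB φ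
  | kdist (φ ψ : Form A) :
      KB (Form.imp (Form.K (Form.imp φ ψ)) (Form.imp (Form.K φ) (Form.K ψ)))
  | kt (φ : Form A) : KB (Form.imp (Form.K φ) φ)
  | k4 (φ : Form A) : KB (Form.imp (Form.K φ) (Form.K (Form.K φ)))
  | k5 (φ : Form A) : KB (Form.imp (Form.neg (Form.K φ)) (Form.K (Form.neg (Form.K φ))))
  | bf : KB (Form.neg (Form.B (Form.bot)))
  | bn : KB (Form.B Form.top)
  | ap (φ : Form A) : KB (Form.imp (Form.B φ) (Form.K (Form.B φ)))
  | an (φ : Form A) : KB (Form.imp (Form.neg (Form.B φ)) (Form.K (Form.neg (Form.B φ))))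
  | kbm (φ ψ : Form A) :
      KB (Form.imp (Form.K (Form.imp φ ψ)) (Form.imp (Form.B φ) (Form.B ψ)))
  | mp {φ ψ : Form A} : KB (Form.imp φ ψ) → KB φ → KB ψ
  | nec {φ : Form A} : KB φ → KB (Form.K φ)

/-- Conjunction of a list of formulas. -/
def bigAnd {A : Type} : List (Form A) → Form A
  | [] => Form.top
  | φ :: l => Form.and φ (bigAnd l)

/-- Disjunction of a list of formulas. -/
def bigOr {A : Type} : List (Form A) → Form A
  | [] => Form.bot
  | φ :: l => Form.or φ (bigOr l)

/-- The conjunction `d_1φ_1∧…∧d_nφ_n∧e_1ψ_1∧…∧e_nψ_n` where `d_i` is the empty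
string iff `i ∈ D` and `e_i` is the empty string iff `i ∈ E` (otherwise `¬`). -/
def conjDE {A : Type} {n : ℕ} (φ ψ : Fin n → Form A) (D E : Finset (Fin n)) : Form A :=
  bigAnd (List.ofFn (fun i => if i ∈ D then φ i else Form.neg (φ i)) ++
          List.ofFn (fun i => if i ∈ E then ψ i else Form.neg (ψ i)))

/-- The formula `F_k`: the disjunction of all the conjunctions in which exactly
`k` of the `d_i` are the empty string and at least `k` of the `e_i` are. -/
noncomputable def segF {A : Type} {n : ℕ} (φ ψ : Fin n → Form A) (k : ℕ) : Form A :=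
  bigOr ((((Finset.univ : Finset (Finset (Fin n) × Finset (Fin n))).filter
      (fun DE => DE.1.card = k ∧ k ≤ DE.2.card)).toList).map
      (fun DE => conjDE φ ψ DE.1 DE.2))

/-- Segerberg's notation `(φ_1,…,φ_n 𝕀 ψ_1,…,ψ_n) := K(F_0 ∨ ⋯ ∨ F_n)`. -/
noncomputable def segI {A : Type} {n : ℕ} (φ ψ : Fin n → Form A) : Form A :=
  Form.K (bigOr ((List.range (n + 1)).map (segF φ ψ)))

/-- The Hilbert calculus `KBeq`, extending `KB` with (D), (SC) and (Scott). -/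
inductive KBeq {A : Type} : Form A → Prop where
  | taut {φ : Form A} : Taut φ → KBeq φ
  | kdist (φ ψ : Form A) :
      KBeq (Form.imp (Form.K (Form.imp φ ψ)) (Form.imp (Form.K φ) (Form.K ψ)))
  | kt (φ : Form A) : KBeq (Form.imp (Form.K φ) φ)
  | k4 (φ : Form A) : KBeq (Form.imp (Form.K φ) (Form.K (Form.K φ)))
  | k5 (φ : Form A) : KBeq (Form.imp (Form.neg (Form.K φ)) (Form.K (Form.neg (Form.K φ))))
  | bf : KBeq (Form.neg (Form.B (Form.bot)))
  | bn : KBeq (Form.B Form.top)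
  | ap (φ : Form A) : KBeq (Form.imp (Form.B φ) (Form.K (Form.B φ)))
  | an (φ : Form A) : KBeq (Form.imp (Form.neg (Form.B φ)) (Form.K (Form.neg (Form.B φ))))
  | kbm (φ ψ : Form A) :
      KBeq (Form.imp (Form.K (Form.imp φ ψ)) (Form.imp (Form.B φ) (Form.B ψ)))
  | dax (φ : Form A) : KBeq (Form.imp (Form.B φ) (Form.neg (Form.B (Form.neg φ))))
  | scax (φ ψ : Form A) :
      KBeq (Form.imp
        (Form.and (Form.neg (Form.B (Form.neg φ)))
          (Form.neg (Form.K (Form.neg (Form.and (Form.neg φ) ψ)))))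
        (Form.B (Form.or φ ψ)))
  | scott (m : ℕ) (φ ψ : Fin (m + 1) → Form A) :
      KBeq (Form.imp
        (Form.and (segI φ ψ)
          (Form.and (Form.B (φ 0))
            (bigAnd (List.ofFn (fun i : Fin m => Form.neg (Form.B (Form.neg (φ i.succ))))))))
        (bigOr (List.ofFn (fun i : Fin (m + 1) => Form.B (ψ i)))))
  | mp {φ ψ : Form A} : KBeq (Form.imp φ ψ) → KBeq φ → KBeq ψ
  | nec {φ : Form A} : KBeq φ → KBeq (Form.K φ)

/-!
Soundness of (Scott) is double counting: if every world lies in at least as many of the sets `Y i`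
as of the sets `X i`, then the `Y i` have the larger total probability, so they cannot all have
probability at most `1/2` when the `X i` have probabilities at least `1/2`, one of them strictly.

For completeness, take a maximal consistent set `S` that omits `φ`. The maximal consistent sets
that agree with `S` on formulas `Kχ` also agree with it on formulas `Bχ`, so those of their members
that are built from finitely many letters depend only on these letters: the traces on the letters
of `φ` form a finite set `W` of worlds, every subset of which is definable by a formula. Hence `S`
believes or does not believe each subset of `W`, and the axioms make the believed subsets behave
like majorities. A weight function on `W` that represents them is a strictly positive solution of
the inequalities "`X` weighs at least as much as its complement" for all `X` with `Xᶜ` not believed,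
strict if `X` is believed. By Motzkin's transposition theorem, an obstruction to solvability over
`ℚ` is a multiset of such `X` that covers no world by more than half; by (Scott) it contains no
believed set, and (SC) then forces it to cover every world by exactly half.
-/

/-! ### Linear inequalities over an ordered field -/

theorem hull_image_sub_smul_le {R V ι : Type*} [Ring R] [PartialOrder R] [IsOrderedRing R]
    [AddCommGroup V] [Module R V] {s : Set ι} {a : ι → V} {v : V} {r : ι → R}
    (hr : ∀ i ∈ s, r i ≤ 0) :
    PointedCone.hull R ((fun i => a i - r i • v) '' s) ≤
      PointedCone.hull R (insert v (a '' s)) := by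
  refine Submodule.span_le.2 (Set.image_subset_iff.2 fun i hi => ?_)
  have ha := Submodule.subset_span (R := {r : R // 0 ≤ r})
    (Set.mem_insert_of_mem v (Set.mem_image_of_mem a hi))
  have hv := Submodule.subset_span (R := {r : R // 0 ≤ r}) (Set.mem_insert v (a '' s))
  rw [Set.mem_preimage, sub_eq_add_neg, ← neg_smul]
  exact add_mem ha (PointedCone.smul_mem _ (neg_nonneg.2 (hr i hi)) hv)

section LinearInequalities

variable {𝕜 V ι : Type*} [Field 𝕜] [LinearOrder 𝕜] [IsStrictOrderedRing 𝕜]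
  [AddCommGroup V] [Module 𝕜 V]

/- Farkas' lemma, proved by eliminating one functional `a j` at a time: if it takes a negative value
at a point `x₀` that satisfies the other inequalities, then `x ↦ x - (a j x / a j x₀) • x₀` projects
onto its kernel. -/
theorem mem_hull_image_of_forall_nonneg (s : Finset ι) (a : ι → Module.Dual 𝕜 V)
    (b : Module.Dual 𝕜 V) (h : ∀ x, (∀ i ∈ s, 0 ≤ a i x) → 0 ≤ b x) :
    b ∈ PointedCone.hull 𝕜 (a '' s) := by
  induction s using Finset.induction_on generalizing a b with
  | empty =>
    have hb : b = 0 := by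
      ext x
      have hneg := h (-x) (by simp)
      rw [map_neg, Left.nonneg_neg_iff] at hneg
      exact le_antisymm hneg (h x (by simp))
    simp [hb]
  | insert j s _ ih =>
    rw [Finset.coe_insert, Set.image_insert_eq]
    set C := PointedCone.hull 𝕜 (insert (a j) (a '' s))
    have haj : a j ∈ C := Submodule.subset_span (Set.mem_insert _ _)
    by_cases hb : ∀ x, (∀ i ∈ s, 0 ≤ a i x) → 0 ≤ b x
    · exact Submodule.span_mono (Set.subset_insert _ _) (ih a b hb)
    push Not at hb
    obtain ⟨x₀, hx₀, hbx₀⟩ := hb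
    have hj : a j x₀ < 0 := by
      by_contra! hj
      exact hbx₀.not_ge (h x₀ (Finset.forall_mem_insert _ _ _ |>.2 ⟨hj, hx₀⟩))
    have hproj : b - (b x₀ / a j x₀) • a j ∈
        PointedCone.hull 𝕜 ((fun i => a i - (a i x₀ / a j x₀) • a j) '' s) := by
      refine ih _ _ fun x hx => ?_
      have hsub : ∀ f : Module.Dual 𝕜 V,
          f (x - (a j x / a j x₀) • x₀) = (f - (f x₀ / a j x₀) • a j) x := fun f => by
        simp only [map_sub, map_smul, LinearMap.sub_apply, LinearMap.smul_apply, smul_eq_mul]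
        ring
      rw [← hsub]
      refine h _ (Finset.forall_mem_insert _ _ _ |>.2 ⟨?_, fun i hi => ?_⟩)
      · simp [hsub, div_self hj.ne]
      · exact hsub (a i) ▸ hx i hi
    have hle := hull_image_sub_smul_le (a := a) (v := a j) fun i (hi : i ∈ (s : Set ι)) =>
      div_nonpos_of_nonneg_of_nonpos (hx₀ i hi) hj.le
    simpa using C.add_mem (hle hproj) (C.smul_mem (div_pos_of_neg_of_neg hbx₀ hj).le haj)

/- Motzkin's transposition theorem. -/
theorem exists_forall_nonneg_and_forall_mem_pos [Fintype ι] (a : ι → Module.Dual 𝕜 V) (S : Set ι)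
    (h : ∀ l : ι → 𝕜, (∀ i, 0 ≤ l i) → ∑ i, l i • a i = 0 → ∀ i ∈ S, l i = 0) :
    ∃ x, (∀ i, 0 ≤ a i x) ∧ ∀ i ∈ S, 0 < a i x := by
  have hone : ∀ j ∈ S, ∃ x, (∀ i, 0 ≤ a i x) ∧ 0 < a j x := by
    intro j hj
    by_contra! hcon
    have hmem := mem_hull_image_of_forall_nonneg Finset.univ a (-a j) fun x hx => by
      simpa using hcon x fun i => hx i (Finset.mem_univ i)
    rw [Finset.coe_univ, Set.image_univ] at hmem
    obtain ⟨l, hl⟩ := (Submodule.mem_span_range_iff_exists_fun _).1 hmem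
    have hsum : ∑ i, ((l i : 𝕜) + Pi.single (M := fun _ => 𝕜) j 1 i) • a i = 0 := by
      simp [add_smul, Finset.sum_add_distrib, hl, Pi.single_apply]
    have hzero := h _ (fun i => add_nonneg (l i).2 (by
      rw [Pi.single_apply]; split_ifs <;> simp)) hsum j hj
    rw [Pi.single_eq_same] at hzero
    linarith [(l j).2]
  choose! x hx hxpos using hone
  refine ⟨∑ j with j ∈ S, x j, fun i => ?_, fun i hi => ?_⟩ <;> rw [map_sum]
  · exact Finset.sum_nonneg fun j hj => hx j (Finset.mem_filter.1 hj).2 i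
  · exact Finset.sum_pos' (fun j hj => hx j (Finset.mem_filter.1 hj).2 i)
      ⟨i, by simp [hi], hxpos i hi⟩

end LinearInequalities

theorem exists_natCast_eq_mul {ι : Type*} [Finite ι] (l : ι → ℚ) (hl : ∀ i, 0 ≤ l i) :
    ∃ (d : ℕ) (n : ι → ℕ), d ≠ 0 ∧ ∀ i, (n i : ℚ) = d * l i := by
  obtain ⟨b, hb⟩ := IsLocalization.exist_integer_multiples_of_finite (nonZeroDivisors ℤ) l
  choose z hz using hb
  refine ⟨b.1.natAbs, fun i => (z i).natAbs,
    Int.natAbs_ne_zero.2 (nonZeroDivisors.ne_zero b.2), fun i => ?_⟩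
  have hzi : (z i : ℚ) = b.1 * l i := by simpa [zsmul_eq_mul] using hz i
  rw [Nat.cast_natAbs, Nat.cast_natAbs, Int.cast_abs, hzi, abs_mul, abs_of_nonneg (hl i),
    Int.cast_abs]

theorem exists_forall_nonneg_and_forall_mem_pos_of_nat {V ι : Type*} [AddCommGroup V] [Module ℚ V]
    [Fintype ι] (a : ι → Module.Dual ℚ V) (S : Set ι)
    (h : ∀ n : ι → ℕ, ∑ i, n i • a i = 0 → ∀ i ∈ S, n i = 0) :
    ∃ x, (∀ i, 0 ≤ a i x) ∧ ∀ i ∈ S, 0 < a i x := by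
  refine exists_forall_nonneg_and_forall_mem_pos a S fun l hl hla i hi => ?_
  obtain ⟨d, n, hd, hn⟩ := exists_natCast_eq_mul l hl
  have hna : ∑ i, n i • a i = 0 := by
    simp only [← Nat.cast_smul_eq_nsmul ℚ, hn, mul_smul, ← Finset.smul_sum, hla, smul_zero]
  simpa [h n hna i hi, hd] using hn i

theorem exists_pos_forall_sum_nonneg {ι σ : Type*} [Finite ι] [Fintype σ] (v : ι → σ → ℤ)
    (S : Set ι)
    (h : ∀ s : Multiset ι, (s.map v).sum ≤ 0 → (s.map v).sum = 0 ∧ ∀ i ∈ s, i ∉ S) :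
    ∃ p : σ → ℚ, (∀ w, 0 < p w) ∧ (∀ i, 0 ≤ ∑ w, v i w * p w) ∧
      ∀ i ∈ S, 0 < ∑ w, v i w * p w := by
  have := Fintype.ofFinite ι
  let a : ι ⊕ σ → Module.Dual ℚ (σ → ℚ) :=
    Sum.elim (fun i => ∑ w, (v i w : ℚ) • LinearMap.proj w) LinearMap.proj
  have ha : ∀ i p, a (Sum.inl i) p = ∑ w, v i w * p w := fun i p => by
    simp [a, LinearMap.sum_apply]
  obtain ⟨p, hp, hpS⟩ := exists_forall_nonneg_and_forall_mem_pos_of_nat a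
      (Sum.inl '' S ∪ Set.range Sum.inr) fun n hn => by
    set s : Multiset ι := Finset.univ.val.bind fun i => Multiset.replicate (n (Sum.inl i)) i
    have hrel : ∀ w, (s.map v).sum w = -n (Sum.inr w) := fun w => by
      have hw : ∑ i, (n (Sum.inl i) : ℚ) * v i w + n (Sum.inr w) = 0 := by
        simpa [LinearMap.sum_apply, ha, a, Pi.single_apply] using
          LinearMap.congr_fun hn (Pi.single w 1)
      have hs : (s.map v).sum = ∑ i, n (Sum.inl i) • v i := by
        simp [s, Multiset.map_bind, Multiset.sum_bind]
      rw [hs, Finset.sum_apply, eq_neg_iff_add_eq_zero]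
      exact_mod_cast hw
    obtain ⟨hzero, hS⟩ := h s fun w =>
      (hrel w).trans_le (neg_nonpos.2 (Nat.cast_nonneg _))
    rintro _ (⟨i, hi, rfl⟩ | ⟨w, rfl⟩)
    · by_contra hni
      exact hS i (Multiset.mem_bind.2 ⟨i, Finset.mem_univ_val i,
        Multiset.mem_replicate.2 ⟨hni, rfl⟩⟩) hi
    · simpa [hzero] using hrel w
  exact ⟨p, fun w => hpS _ (Or.inr ⟨w, rfl⟩), fun i => ha i p ▸ hp _,
    fun i hi => ha i p ▸ hpS _ (Or.inl ⟨i, hi, rfl⟩)⟩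

/-! ### Majorities -/

section Majority

variable {W : Type*}

/-- The `±1`-valued indicator of `X`, whose weighted sum compares the weights of `X` and `Xᶜ`. -/
noncomputable def signVec (X : Set W) (w : W) : ℤ := if w ∈ X then 1 else -1

theorem signVec_insert_of_ne (X : Set W) {x w : W} (hw : w ≠ x) :
    signVec (insert x X) w = signVec X w := by
  simp [signVec, hw]

theorem sum_signVec_nonpos_iff {ι : Type*} [Fintype ι] (X : ι → Set W) (w : W) :
    ∑ i, signVec (X i) w ≤ 0 ↔
      (Finset.univ.filter fun i => w ∈ X i).card ≤
        (Finset.univ.filter fun i => w ∈ (X i)ᶜ).card := by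
  simp only [signVec, Finset.sum_ite, Finset.sum_const, Set.mem_compl_iff, smul_neg, nsmul_one]
  omega

theorem sum_signVec_mul [Fintype W] {R : Type*} [CommRing R] (X : Set W) (p : W → R) :
    ∑ w, signVec X w * p w = 2 * ∑ w with w ∈ X, p w - ∑ w, p w := by
  have hsplit := Finset.sum_filter_add_sum_filter_not Finset.univ (· ∈ X) p
  simp only [signVec, Int.cast_ite, Int.cast_one, Int.cast_neg, ite_mul, one_mul, neg_mul,
    Finset.sum_ite, Finset.sum_neg_distrib]
  linear_combination -hsplit

/-- The properties that axioms (D), (SC) and (Scott) impose on the system `N` of sets of worlds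
to which a finite cluster assigns belief. -/
structure IsMajority (N : Set (Set W)) : Prop where
  compl_notMem : ∀ X ∈ N, Xᶜ ∉ N
  insert_mem : ∀ X x, Xᶜ ∉ N → x ∉ X → insert x X ∈ N
  scott : ∀ (m : ℕ) (X Y : Fin (m + 1) → Set W),
    (∀ w, (Finset.univ.filter fun i => w ∈ X i).card ≤
      (Finset.univ.filter fun i => w ∈ Y i).card) →
    X 0 ∈ N → (∀ i : Fin m, (X i.succ)ᶜ ∉ N) → ∃ i, Y i ∈ N

namespace IsMajority

variable {N : Set (Set W)}

theorem notMem_of_sum_signVec_nonpos (hN : IsMajority N) {s : Multiset (Set W)}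
    (hs : ∀ X ∈ s, Xᶜ ∉ N) (hsum : (s.map signVec).sum ≤ 0) {X : Set W} (hX : X ∈ s) :
    X ∉ N := by
  intro hXN
  obtain ⟨t, rfl⟩ := Multiset.exists_cons_of_mem hX
  induction t using Quotient.inductionOn with | h l =>
  set F : Fin (l.length + 1) → Set W := (X :: l).get
  have hF : ∀ i, (F i)ᶜ ∉ N := fun i => hs _ (List.get_mem (X :: l) i)
  have hcard : ∀ w, (Finset.univ.filter fun i => w ∈ F i).card ≤
      (Finset.univ.filter fun i => w ∈ (F i)ᶜ).card := fun w => by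
    have hw := hsum w
    rw [Pi.multiset_sum_apply] at hw
    refine (sum_signVec_nonpos_iff F w).1 ?_
    simpa [F, Fin.sum_univ_succ, Function.comp_def, Fin.sum_univ_fun_getElem l (signVec · w)]
      using hw
  obtain ⟨i, hi⟩ := hN.scott l.length F (fun i => (F i)ᶜ) (fun w => by convert hcard w) hXN
    fun i => hF i.succ
  exact hF i hi

/- If the sum were negative at `w₀`, the multiset would contain some `X₀` that omits `w₀`; then the
believed set `insert w₀ X₀` fits into twice the multiset in place of one copy of `X₀`. -/
theorem sum_signVec_eq_zero (hN : IsMajority N) {s : Multiset (Set W)}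
    (hs : ∀ X ∈ s, Xᶜ ∉ N) (hsum : (s.map signVec).sum ≤ 0) : (s.map signVec).sum = 0 := by
  refine hsum.antisymm fun w₀ => ?_
  by_contra! hneg
  rw [Pi.zero_apply] at hneg
  obtain ⟨X₀, hX₀, hw₀⟩ : ∃ X ∈ s, w₀ ∉ X := by
    by_contra! hall
    refine hneg.not_ge ?_
    rw [Pi.multiset_sum_apply]
    exact Multiset.sum_nonneg (by simp +contextual [signVec, hall])
  obtain ⟨t, rfl⟩ := Multiset.exists_cons_of_mem hX₀
  have hins := hN.insert_mem X₀ w₀ (hs _ hX₀) hw₀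
  refine hN.notMem_of_sum_signVec_nonpos (s := insert w₀ X₀ ::ₘ (t + X₀ ::ₘ t)) ?_ ?_
    (Multiset.mem_cons_self _ _) hins
  · simp only [Multiset.mem_cons, Multiset.mem_add] at hs ⊢
    rintro X (rfl | hX | hX)
    exacts [hN.compl_notMem _ hins, hs X (Or.inr hX), hs X hX]
  · intro w
    have hw := hsum w
    simp only [Multiset.map_cons, Multiset.map_add, Multiset.sum_cons, Multiset.sum_add,
      Pi.add_apply, Pi.zero_apply] at hneg hw ⊢
    rcases eq_or_ne w w₀ with rfl | hne
    · simp only [signVec, Set.mem_insert_iff, true_or, hw₀, if_true, if_false] at hneg ⊢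
      omega
    · rw [signVec_insert_of_ne X₀ hne]
      omega

theorem exists_weights [Fintype W] [Nonempty W] (hN : IsMajority N) :
    ∃ p : W → ℚ, (∀ w, 0 < p w) ∧ ∑ w, p w = 1 ∧
      ∀ X, X ∈ N ↔ 1 / 2 < ∑ w with w ∈ X, p w := by
  obtain ⟨q, hq, hle, hlt⟩ := exists_pos_forall_sum_nonneg
    (fun X : {X // Xᶜ ∉ N} => signVec X.1) {X | X.1 ∈ N} fun s hs => by
      have hmap : s.map (fun X => signVec X.1) = (s.map Subtype.val).map signVec :=
        (Multiset.map_map signVec Subtype.val s).symm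
      have hsN : ∀ X ∈ s.map Subtype.val, Xᶜ ∉ N := by
        simp only [Multiset.mem_map]
        rintro _ ⟨X, -, rfl⟩
        exact X.2
      rw [hmap] at hs ⊢
      exact ⟨hN.sum_signVec_eq_zero hsN hs, fun X hX =>
        hN.notMem_of_sum_signVec_nonpos hsN hs (Multiset.mem_map_of_mem _ hX)⟩
  simp only [sum_signVec_mul] at hle hlt
  have htotal : 0 < ∑ w, q w := Finset.sum_pos (fun w _ => hq w) Finset.univ_nonempty
  refine ⟨fun w => q w / ∑ w, q w, fun w => div_pos (hq w) htotal,
    by rw [← Finset.sum_div, div_self htotal.ne'], fun X => ?_⟩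
  rw [← Finset.sum_div, lt_div_iff₀ htotal]
  refine ⟨fun hX => ?_, fun hX => ?_⟩
  · linarith [hlt ⟨X, hN.compl_notMem X hX⟩ hX]
  · by_contra hXN
    have hXc := hle ⟨Xᶜ, by rwa [compl_compl]⟩
    have hsplit := Finset.sum_filter_add_sum_filter_not Finset.univ (· ∈ X) q
    simp only [Set.mem_compl_iff] at hXc
    linarith

end IsMajority

end Majority

/-! ### Truth predicates -/

/-- A predicate on formulas that respects the Boolean connectives; worlds of a model and maximal
consistent sets are both viewed as such predicates. -/
structure IsTruthPredicate {A : Type} (T : Form A → Prop) : Prop where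
  top : T Form.top
  neg_iff (φ) : T (Form.neg φ) ↔ ¬ T φ
  and_iff (φ ψ) : T (Form.and φ ψ) ↔ T φ ∧ T ψ

namespace IsTruthPredicate

variable {A : Type} {T : Form A → Prop}

theorem imp_iff (hT : IsTruthPredicate T) (φ ψ : Form A) : T (Form.imp φ ψ) ↔ (T φ → T ψ) := by
  simp only [Form.imp, hT.neg_iff, hT.and_iff, not_and_not_right]

theorem or_iff (hT : IsTruthPredicate T) (φ ψ : Form A) : T (Form.or φ ψ) ↔ T φ ∨ T ψ := by
  simp only [Form.or, hT.neg_iff, hT.and_iff, not_and_or, not_not]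

theorem not_bot (hT : IsTruthPredicate T) : ¬ T Form.bot := by
  simp [Form.bot, hT.neg_iff, hT.top]

theorem bigAnd_iff (hT : IsTruthPredicate T) (l : List (Form A)) : T (bigAnd l) ↔ ∀ χ ∈ l, T χ := by
  induction l with
  | nil => simp [bigAnd, hT.top]
  | cons χ l ih => simp [bigAnd, hT.and_iff, ih]

theorem bigOr_iff (hT : IsTruthPredicate T) (l : List (Form A)) : T (bigOr l) ↔ ∃ χ ∈ l, T χ := by
  induction l with
  | nil => simp [bigOr, hT.not_bot]
  | cons χ l ih => simp [bigOr, hT.or_iff, ih]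

theorem ite_neg_iff (hT : IsTruthPredicate T) (p : Prop) [Decidable p] (χ : Form A) :
    T (if p then χ else Form.neg χ) ↔ (T χ ↔ p) := by
  split_ifs with hp <;> simp [hp, hT.neg_iff]

theorem conjDE_iff (hT : IsTruthPredicate T) {n : ℕ} (φ ψ : Fin n → Form A)
    (D E : Finset (Fin n)) :
    T (conjDE φ ψ D E) ↔
      (Finset.univ.filter fun i => T (φ i)) = D ∧ (Finset.univ.filter fun i => T (ψ i)) = E := by
  simp [conjDE, hT.bigAnd_iff, List.mem_ofFn, or_imp, forall_and, hT.ite_neg_iff, Finset.ext_iff]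

theorem segF_iff (hT : IsTruthPredicate T) {n : ℕ} (φ ψ : Fin n → Form A) (k : ℕ) :
    T (segF φ ψ k) ↔ (Finset.univ.filter fun i => T (φ i)).card = k ∧
      k ≤ (Finset.univ.filter fun i => T (ψ i)).card := by
  simp [segF, hT.bigOr_iff, hT.conjDE_iff]

theorem bigOr_segF_iff (hT : IsTruthPredicate T) {n : ℕ} (φ ψ : Fin n → Form A) :
    T (bigOr ((List.range (n + 1)).map (segF φ ψ))) ↔
      (Finset.univ.filter fun i => T (φ i)).card ≤
        (Finset.univ.filter fun i => T (ψ i)).card := by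
  simp only [hT.bigOr_iff, List.mem_map, List.mem_range, exists_exists_and_eq_and, hT.segF_iff]
  constructor
  · rintro ⟨_, -, rfl, hle⟩
    exact hle
  · exact fun hle => ⟨_, Nat.lt_succ_of_le (card_finset_fin_le _), rfl, hle⟩

theorem evalb_decide_iff (hT : IsTruthPredicate T) (φ : Form A) :
    evalb (fun χ => decide (T χ)) φ = true ↔ T φ := by
  induction φ with
  | top => simp [evalb, hT.top]
  | neg φ ih => simp [evalb, hT.neg_iff, ← ih]
  | and φ ψ ihφ ihψ => simp [evalb, hT.and_iff, ihφ, ihψ]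
  | atom | K | B => simp [evalb]

end IsTruthPredicate

section

variable {A : Type}

theorem isTruthPredicate_evalb (v : Form A → Bool) : IsTruthPredicate (evalb v · = true) where
  top := rfl
  neg_iff := by simp [evalb]
  and_iff := by simp [evalb]

theorem taut_iff {φ : Form A} : Taut φ ↔ ∀ T : Form A → Prop, IsTruthPredicate T → T φ :=
  ⟨fun h _ hT => (hT.evalb_decide_iff φ).1 (h _), fun h v => h _ (isTruthPredicate_evalb v)⟩

theorem Form.exists_conj {ι : Type*} [Finite ι] (f : ι → Form A) :
    ∃ χ, ∀ T, IsTruthPredicate T → (T χ ↔ ∀ i, T (f i)) := by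
  have := Fintype.ofFinite ι
  exact ⟨bigAnd (Finset.univ.toList.map f), fun T hT => by simp [hT.bigAnd_iff]⟩

theorem Form.exists_disj {ι : Type*} [Finite ι] (f : ι → Form A) :
    ∃ χ, ∀ T, IsTruthPredicate T → (T χ ↔ ∃ i, T (f i)) := by
  have := Fintype.ofFinite ι
  exact ⟨bigOr (Finset.univ.toList.map f), fun T hT => by simp [hT.bigOr_iff]⟩

end

/-! ### Probability in epistemic models -/

namespace EPM

variable {W A : Type} (M : EPM W A) {w : W} {X Y : Set W}

theorem P_mono (h : X ⊆ Y) : M.P X ≤ M.P Y := by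
  have hadd := M.add X (Y \ X) (Set.inter_sdiff_self X Y)
  rw [Set.union_sdiff_cancel h] at hadd
  exact hadd ▸ le_add_of_nonneg_right (M.nonneg _)

theorem P_cl_pos (w : W) : 0 < M.P (M.cl w) :=
  (M.full w).trans_le (M.P_mono (Set.singleton_subset_iff.2 (M.equiv.refl w)))

theorem Pw_congr {v : W} (h : M.R w v) : M.Pw w = M.Pw v := by
  have hcl : M.cl w = M.cl v := Set.ext fun _ =>
    ⟨M.equiv.trans (M.equiv.symm h), M.equiv.trans h⟩
  funext X
  rw [Pw, Pw, hcl]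

theorem Pw_nonneg (w : W) (X : Set W) : 0 ≤ M.Pw w X :=
  div_nonneg (M.nonneg _) (M.nonneg _)

theorem Pw_univ (w : W) : M.Pw w Set.univ = 1 := by
  rw [Pw, Set.univ_inter, div_self (M.P_cl_pos w).ne']

theorem Pw_union (w : W) (h : X ∩ Y = ∅) : M.Pw w (X ∪ Y) = M.Pw w X + M.Pw w Y := by
  rw [Pw, Set.union_inter_distrib_right, M.add, add_div]
  · rfl
  · rw [← Set.inter_inter_distrib_right, h, Set.empty_inter]

theorem Pw_compl (w : W) (X : Set W) : M.Pw w Xᶜ = 1 - M.Pw w X := by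
  rw [eq_sub_iff_add_eq', ← M.Pw_union w (Set.inter_compl_self X), Set.union_compl_self, M.Pw_univ]

theorem Pw_empty (w : W) : M.Pw w ∅ = 0 := by
  rw [← Set.compl_univ, M.Pw_compl, M.Pw_univ, sub_self]

theorem Pw_mono (h : ∀ v, M.R w v → v ∈ X → v ∈ Y) : M.Pw w X ≤ M.Pw w Y :=
  div_le_div_of_nonneg_right (M.P_mono fun v hv => ⟨h v hv.2 hv.1, hv.2⟩) (M.P_cl_pos w).le

theorem Pw_singleton_pos {v : W} (h : M.R w v) : 0 < M.Pw w {v} := by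
  have hsub : {v} ⊆ M.cl w := Set.singleton_subset_iff.2 h
  rw [Pw, Set.inter_eq_left.2 hsub]
  exact div_pos (M.full v) (M.P_cl_pos w)

theorem Pw_strictMono (h : ∀ v, M.R w v → v ∈ X → v ∈ Y)
    (hne : ∃ v, M.R w v ∧ v ∉ X ∧ v ∈ Y) : M.Pw w X < M.Pw w Y := by
  obtain ⟨v, hv, hvX, hvY⟩ := hne
  calc M.Pw w X < M.Pw w X + M.Pw w {v} := lt_add_of_pos_right _ (M.Pw_singleton_pos hv)
    _ = M.Pw w (X ∪ {v}) := (M.Pw_union w (Set.inter_singleton_eq_empty.2 hvX)).symm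
    _ ≤ M.Pw w Y := M.Pw_mono fun u hu => by
      rintro (huX | rfl)
      exacts [h u hu huX, hvY]

theorem Pw_eq_one_iff : M.Pw w X = 1 ↔ ∀ v, M.R w v → v ∈ X := by
  rw [← M.Pw_univ w]
  refine ⟨fun h v hv => ?_, fun h => (M.Pw_mono fun v _ _ => Set.mem_univ v).antisymm
    (M.Pw_mono fun v hv _ => h v hv)⟩
  by_contra hvX
  exact (M.Pw_strictMono (fun v _ _ => Set.mem_univ v) ⟨v, hv, hvX, Set.mem_univ v⟩).ne h

theorem Pw_eq_sum [Fintype W] (w : W) (X : Set W) :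
    M.Pw w X = ∑ v with v ∈ X, M.Pw w {v} := by
  have hcoe : ∀ s : Finset W, M.Pw w s = ∑ v ∈ s, M.Pw w {v} := fun s => by
    induction s using Finset.induction_on with
    | empty => simp [M.Pw_empty]
    | insert a s ha ih =>
      rw [Finset.sum_insert ha, Finset.coe_insert, Set.insert_eq,
        M.Pw_union w (Set.singleton_inter_eq_empty.2 ha), ih]
  simp [← hcoe]

theorem sum_Pw_eq_sum_card_mul {ι : Type*} [Fintype ι] [Fintype W] (w : W) (X : ι → Set W) :
    ∑ i, M.Pw w (X i) = ∑ v, (Finset.univ.filter fun i => v ∈ X i).card * M.Pw w {v} := by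
  simp only [M.Pw_eq_sum w (X _), Finset.sum_filter]
  rw [Finset.sum_comm]
  simp [← Finset.sum_filter]

theorem sum_Pw_le_sum_Pw {ι : Type*} [Fintype ι] {X Y : ι → Set W}
    (h : ∀ v, M.R w v →
      (Finset.univ.filter fun i => v ∈ X i).card ≤ (Finset.univ.filter fun i => v ∈ Y i).card) :
    ∑ i, M.Pw w (X i) ≤ ∑ i, M.Pw w (Y i) := by
  have := M.finite
  have := Fintype.ofFinite W
  simp only [M.sum_Pw_eq_sum_card_mul]
  refine Finset.sum_le_sum fun v _ => ?_
  by_cases hv : M.R w v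
  · exact mul_le_mul_of_nonneg_right (Nat.cast_le.2 (h v hv)) (M.Pw_nonneg w {v})
  · have hzero : M.Pw w {v} = 0 := ((M.Pw_mono (by rintro _ hu rfl; exact hv hu)).trans_eq
      (M.Pw_empty w)).antisymm (M.Pw_nonneg w {v})
    simp [hzero]

end EPM

namespace EPM

variable {W A : Type} (M : EPM W A) {c : ℝ} {w : W} {X Y : Set W}

theorem not_lt_Pw_compl (hc : 1 / 2 ≤ c) (hX : c < M.Pw w X) : ¬ c < M.Pw w Xᶜ := by
  rw [M.Pw_compl]
  linarith

theorem lt_Pw_of_not_lt_Pw_compl (hc : c ≤ 1 / 2) (hX : ¬ c < M.Pw w Xᶜ)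
    (h : ∀ v, M.R w v → v ∈ X → v ∈ Y) (hne : ∃ v, M.R w v ∧ v ∉ X ∧ v ∈ Y) :
    c < M.Pw w Y := by
  rw [M.Pw_compl] at hX
  linarith [M.Pw_strictMono h hne]

theorem exists_lt_Pw_of_card_le (hc : c ≤ 1 / 2) {m : ℕ} {X Y : Fin (m + 1) → Set W}
    (hcard : ∀ v, M.R w v →
      (Finset.univ.filter fun i => v ∈ X i).card ≤ (Finset.univ.filter fun i => v ∈ Y i).card)
    (hzero : c < M.Pw w (X 0)) (hsucc : ∀ i : Fin m, ¬ c < M.Pw w (X i.succ)ᶜ) :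
    ∃ i, c < M.Pw w (Y i) := by
  have hX : ∀ i : Fin m, c ≤ M.Pw w (X i.succ) := fun i => by
    have hi := hsucc i
    rw [M.Pw_compl] at hi
    linarith
  have hsum : ∑ _i : Fin (m + 1), c < ∑ i, M.Pw w (Y i) :=
    calc ∑ _i : Fin (m + 1), c = c + ∑ _i : Fin m, c := Fin.sum_univ_succ _
      _ < M.Pw w (X 0) + ∑ i : Fin m, M.Pw w (X i.succ) :=
        add_lt_add_of_lt_of_le hzero (Finset.sum_le_sum fun i _ => hX i)
      _ = ∑ i, M.Pw w (X i) := (Fin.sum_univ_succ fun i => M.Pw w (X i)).symm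
      _ ≤ ∑ i, M.Pw w (Y i) := M.sum_Pw_le_sum_Pw hcard
  simpa using Finset.exists_lt_of_sum_lt hsum

end EPM

section Soundness

variable {W A : Type} (c : ℝ) (M : EPM W A) (w : W) {φ ψ : Form A}

theorem isTruthPredicate_mem_psem : IsTruthPredicate (w ∈ psem c M ·) where
  top := Set.mem_univ w
  neg_iff _ := Iff.rfl
  and_iff _ _ := Iff.rfl

theorem mem_psem_neg : w ∈ psem c M (Form.neg φ) ↔ w ∉ psem c M φ := Iff.rfl

theorem mem_psem_and : w ∈ psem c M (Form.and φ ψ) ↔ w ∈ psem c M φ ∧ w ∈ psem c M ψ := Iff.rfl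

theorem mem_psem_imp : w ∈ psem c M (Form.imp φ ψ) ↔ (w ∈ psem c M φ → w ∈ psem c M ψ) :=
  (isTruthPredicate_mem_psem c M w).imp_iff φ ψ

theorem mem_psem_or : w ∈ psem c M (Form.or φ ψ) ↔ w ∈ psem c M φ ∨ w ∈ psem c M ψ :=
  (isTruthPredicate_mem_psem c M w).or_iff φ ψ

theorem mem_psem_K : w ∈ psem c M (Form.K φ) ↔ ∀ v, M.R w v → v ∈ psem c M φ :=
  M.Pw_eq_one_iff

theorem mem_psem_B : w ∈ psem c M (Form.B φ) ↔ c < M.Pw w (psem c M φ) := Iff.rfl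

theorem mem_psem_B_or (hc : c ≤ 1 / 2) (hφ : w ∉ psem c M (Form.B (Form.neg φ)))
    (hψ : w ∉ psem c M (Form.K (Form.neg (Form.and (Form.neg φ) ψ)))) :
    w ∈ psem c M (Form.B (Form.or φ ψ)) := by
  simp only [mem_psem_K, mem_psem_neg, mem_psem_and, not_forall, not_not] at hψ
  obtain ⟨v, hv, hvφ, hvψ⟩ := hψ
  exact M.lt_Pw_of_not_lt_Pw_compl hc hφ (fun u _ hu => (mem_psem_or c M u).2 (Or.inl hu))
    ⟨v, hv, hvφ, (mem_psem_or c M v).2 (Or.inr hvψ)⟩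

theorem exists_mem_psem_B_of_segI (hc : c ≤ 1 / 2) {m : ℕ} (φ ψ : Fin (m + 1) → Form A)
    (hseg : w ∈ psem c M (segI φ ψ)) (hzero : w ∈ psem c M (Form.B (φ 0)))
    (hsucc : ∀ i : Fin m, w ∉ psem c M (Form.B (Form.neg (φ i.succ)))) :
    ∃ i, w ∈ psem c M (Form.B (ψ i)) := by
  rw [segI, mem_psem_K] at hseg
  exact M.exists_lt_Pw_of_card_le hc
    (fun v hv => ((isTruthPredicate_mem_psem c M v).bigOr_segF_iff φ ψ).1 (hseg v hv)) hzero hsucc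

theorem KBeq.mem_psem (h : KBeq φ) : w ∈ psem (1 / 2) M φ := by
  induction h generalizing w with
  | taut hφ => exact taut_iff.1 hφ _ (isTruthPredicate_mem_psem _ M w)
  | kdist φ ψ =>
    simp only [mem_psem_imp, mem_psem_K]
    exact fun himp hφ v hv => himp v hv (hφ v hv)
  | kt φ =>
    simp only [mem_psem_imp, mem_psem_K]
    exact fun hφ => hφ w (M.equiv.refl w)
  | k4 φ =>
    simp only [mem_psem_imp, mem_psem_K]
    exact fun hφ v hv u hu => hφ u (M.equiv.trans hv hu)
  | k5 φ =>
    simp only [mem_psem_imp, mem_psem_neg, mem_psem_K]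
    exact fun hφ v hv hvφ => hφ fun u hu => hvφ u (M.equiv.trans (M.equiv.symm hv) hu)
  | bf => simp [Form.bot, psem, M.Pw_empty]
  | bn => simpa [psem, M.Pw_univ] using one_half_lt_one (α := ℝ)
  | ap φ | an φ =>
    simp only [mem_psem_imp, mem_psem_neg, mem_psem_K, mem_psem_B]
    exact fun hφ v hv => M.Pw_congr hv ▸ hφ
  | kbm φ ψ =>
    simp only [mem_psem_imp, mem_psem_K, mem_psem_B]
    exact fun himp hφ => hφ.trans_le (M.Pw_mono himp)
  | dax φ =>
    simp only [mem_psem_imp, mem_psem_neg, mem_psem_B]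
    exact M.not_lt_Pw_compl le_rfl
  | scax φ ψ =>
    simp only [mem_psem_imp, mem_psem_and, mem_psem_neg]
    exact fun ⟨hφ, hψ⟩ => mem_psem_B_or _ M w le_rfl hφ hψ
  | scott m φ ψ =>
    simp only [mem_psem_imp, mem_psem_and, (isTruthPredicate_mem_psem _ M w).bigAnd_iff,
      (isTruthPredicate_mem_psem _ M w).bigOr_iff, List.mem_ofFn, exists_exists_eq_and,
      forall_exists_index, forall_apply_eq_imp_iff]
    exact fun ⟨hseg, hzero, hsucc⟩ => exists_mem_psem_B_of_segI _ M w le_rfl φ ψ hseg hzero hsucc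
  | mp _ _ ihimp ihφ => exact (mem_psem_imp _ M w).1 (ihimp w) (ihφ w)
  | nec _ ih => exact (mem_psem_K _ M w).2 fun v _ => ih v

end Soundness

/-! ### Maximal consistent sets -/

/-- Derivability in `KBeq` from a set of hypotheses, to which necessitation does not apply. -/
inductive Derivable {A : Type} (S : Set (Form A)) : Form A → Prop where
  | hyp {φ : Form A} : φ ∈ S → Derivable S φ
  | thm {φ : Form A} : KBeq φ → Derivable S φ
  | mp {φ ψ : Form A} : Derivable S (Form.imp φ ψ) → Derivable S φ → Derivable S ψ

namespace Derivable

variable {A : Type} {S : Set (Form A)} {φ ψ : Form A}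

theorem of_forall_isTruthPredicate (h : ∀ T : Form A → Prop, IsTruthPredicate T → T φ) :
    Derivable S φ :=
  thm (KBeq.taut (taut_iff.2 h))

theorem mono {T : Set (Form A)} (hST : S ⊆ T) (h : Derivable S φ) : Derivable T φ := by
  induction h with
  | hyp hφ => exact hyp (hST hφ)
  | thm hφ => exact thm hφ
  | mp _ _ ihimp ihφ => exact mp ihimp ihφ

theorem of_forall_isTruthPredicate₂ {χ : Form A} (hφ : Derivable S φ) (hψ : Derivable S ψ)
    (h : ∀ T : Form A → Prop, IsTruthPredicate T → T φ → T ψ → T χ) : Derivable S χ :=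
  mp (mp (of_forall_isTruthPredicate fun T hT =>
    (hT.imp_iff φ _).2 fun hTφ => (hT.imp_iff ψ χ).2 (h T hT hTφ)) hφ) hψ

theorem deduction (h : Derivable (insert φ S) ψ) : Derivable S (Form.imp φ ψ) := by
  have himp : ∀ {χ}, Derivable S χ → Derivable S (Form.imp φ χ) := fun {χ} hχ =>
    hχ.of_forall_isTruthPredicate₂ hχ fun T hT hTχ _ => (hT.imp_iff φ χ).2 fun _ => hTχ
  induction h with
  | @hyp χ hχ =>
    rcases hχ with rfl | hχ
    · exact of_forall_isTruthPredicate fun T hT => (hT.imp_iff χ χ).2 id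
    · exact himp (hyp hχ)
  | thm hχ => exact himp (thm hχ)
  | mp _ _ ihimp ihχ =>
    refine ihimp.of_forall_isTruthPredicate₂ ihχ fun T hT => ?_
    simp only [hT.imp_iff]
    exact fun hTimp hTχ hTφ => hTimp hTφ (hTχ hTφ)

theorem KBeq_of_empty (h : Derivable ∅ φ) : KBeq φ := by
  induction h with
  | hyp hφ => exact hφ.elim
  | thm hφ => exact hφ
  | mp _ _ ihimp ihφ => exact KBeq.mp ihimp ihφ

theorem exists_mem_of_sUnion {c : Set (Set (Form A))} (hc : IsChain (· ⊆ ·) c)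
    (hne : c.Nonempty) (h : Derivable (⋃₀ c) φ) : ∃ S ∈ c, Derivable S φ := by
  induction h with
  | hyp hφ =>
    obtain ⟨S, hS, hφS⟩ := hφ
    exact ⟨S, hS, hyp hφS⟩
  | thm hφ =>
    obtain ⟨S, hS⟩ := hne
    exact ⟨S, hS, thm hφ⟩
  | mp _ _ ihimp ihφ =>
    obtain ⟨S, hS, himp⟩ := ihimp
    obtain ⟨T, hT, hφ⟩ := ihφ
    rcases hc.total hS hT with hST | hTS
    · exact ⟨T, hT, (himp.mono hST).mp hφ⟩
    · exact ⟨S, hS, himp.mp (hφ.mono hTS)⟩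

end Derivable

/-- Maximal consistent sets, encoded by their closure properties: they decide the Boolean
connectives and contain every theorem of `KBeq`. -/
structure IsMCS {A : Type} (S : Set (Form A)) : Prop extends IsTruthPredicate (· ∈ S) where
  mem_of_KBeq {φ} : KBeq φ → φ ∈ S

namespace IsMCS

variable {A : Type} {S : Set (Form A)} {φ ψ : Form A}

theorem mp (hS : IsMCS S) (himp : Form.imp φ ψ ∈ S) (hφ : φ ∈ S) : ψ ∈ S :=
  (hS.imp_iff φ ψ).1 himp hφ

theorem mem_of_KBeq_imp (hS : IsMCS S) (himp : KBeq (Form.imp φ ψ)) (hφ : φ ∈ S) : ψ ∈ S :=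
  hS.mp (hS.mem_of_KBeq himp) hφ

theorem of_maximal_not_derivable (hS : Maximal (¬ Derivable · φ) S) : IsMCS S := by
  have himp : ∀ χ, χ ∉ S → Derivable S (Form.imp χ φ) := fun χ hχ => by
    refine Derivable.deduction ?_
    by_contra hcon
    exact hχ (hS.le_of_ge hcon (Set.subset_insert χ S) (Set.mem_insert χ S))
  have hmem : ∀ χ, Derivable S χ ↔ χ ∈ S := fun χ =>
    ⟨fun h => by_contra fun hχ => hS.prop ((himp χ hχ).mp h), Derivable.hyp⟩
  have hclosed : ∀ {χ ξ ζ : Form A}, (∀ T, IsTruthPredicate T → T χ → T ξ → T ζ) →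
      χ ∈ S → ξ ∈ S → ζ ∈ S := fun {χ ξ ζ} h hχ hξ =>
    (hmem ζ).1 (((hmem χ).2 hχ).of_forall_isTruthPredicate₂ ((hmem ξ).2 hξ) h)
  refine {
    top := (hmem _).1 (.of_forall_isTruthPredicate fun T hT => hT.top)
    neg_iff := fun χ => ⟨fun hneg hχ => ?_, fun hχ => by_contra fun hneg => ?_⟩
    and_iff := fun χ ξ => ⟨fun h => ⟨?_, ?_⟩, fun h => ?_⟩
    mem_of_KBeq := fun h => (hmem _).1 (.thm h) }
  · exact hS.prop ((hmem φ).2 (hclosed (fun T hT hTneg hTχ =>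
      ((hT.neg_iff χ).1 hTneg hTχ).elim) hneg hχ))
  · refine hS.prop ((himp χ hχ).of_forall_isTruthPredicate₂ (himp _ hneg) fun T hT => ?_)
    simp only [hT.imp_iff, hT.neg_iff]
    tauto
  · exact hclosed (fun T hT hTand _ => ((hT.and_iff χ ξ).1 hTand).1) h h
  · exact hclosed (fun T hT hTand _ => ((hT.and_iff χ ξ).1 hTand).2) h h
  · exact hclosed (fun T hT hTχ hTξ => (hT.and_iff χ ξ).2 ⟨hTχ, hTξ⟩) h.1 h.2

end IsMCS

theorem lindenbaum {A : Type} {S : Set (Form A)} {φ : Form A} (h : ¬ Derivable S φ) :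
    ∃ T, IsMCS T ∧ S ⊆ T ∧ φ ∉ T := by
  obtain ⟨T, hST, hT⟩ := zorn_subset_nonempty {T : Set (Form A) | ¬ Derivable T φ}
    (fun c hcS hc hne => ⟨⋃₀ c, fun hcφ => by
      obtain ⟨U, hU, hUφ⟩ := hcφ.exists_mem_of_sUnion hc hne
      exact hcS hU hUφ, fun _ => Set.subset_sUnion_of_mem⟩) S h
  exact ⟨T, .of_maximal_not_derivable hT, hST, fun hφ => hT.prop (.hyp hφ)⟩

/-! ### The finite canonical model -/

/-- The maximal consistent sets that contain the same formulas `Kχ` as `S`: the equivalence class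
of `S` in the canonical model. -/
def Cluster {A : Type} (S : Set (Form A)) : Type :=
  {T : Set (Form A) // IsMCS T ∧ ∀ χ, Form.K χ ∈ T ↔ Form.K χ ∈ S}

namespace Cluster

variable {A : Type} {S : Set (Form A)} {φ ψ : Form A}

theorem exists_notMem_of_K_notMem (hS : IsMCS S) (hK : Form.K φ ∉ S) :
    ∃ T : Cluster S, φ ∉ T.1 := by
  let U := {χ | χ ∈ S ∧ (χ ∈ Set.range Form.K ∨ χ ∈ Set.range (Form.neg ∘ Form.K))}
  have hU : ∀ χ, Derivable U χ → Form.K χ ∈ S := fun χ h => by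
    induction h with
    | hyp hχ =>
      obtain ⟨hχS, ⟨χ, rfl⟩ | ⟨χ, rfl⟩⟩ := hχ
      exacts [hS.mem_of_KBeq_imp (KBeq.k4 χ) hχS, hS.mem_of_KBeq_imp (KBeq.k5 χ) hχS]
    | thm hχ => exact hS.mem_of_KBeq (KBeq.nec hχ)
    | mp _ _ ihimp ihχ => exact hS.mp (hS.mem_of_KBeq_imp (KBeq.kdist _ _) ihimp) ihχ
  obtain ⟨T, hT, hUT, hφT⟩ := lindenbaum fun h => hK (hU φ h)
  refine ⟨⟨T, hT, fun χ => ⟨fun hχT => ?_, fun hχS => hUT ⟨hχS, Or.inl ⟨χ, rfl⟩⟩⟩⟩, hφT⟩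
  by_contra hχS
  exact (hT.neg_iff _).1 (hUT ⟨(hS.neg_iff _).2 hχS, Or.inr ⟨χ, rfl⟩⟩) hχT

theorem K_mem_iff (hS : IsMCS S) : Form.K φ ∈ S ↔ ∀ T : Cluster S, φ ∈ T.1 := by
  refine ⟨fun hK T => T.2.1.mem_of_KBeq_imp (KBeq.kt φ) ((T.2.2 φ).2 hK), fun h => ?_⟩
  by_contra hK
  obtain ⟨T, hT⟩ := exists_notMem_of_K_notMem hS hK
  exact hT (h T)

theorem B_mem_iff (hS : IsMCS S) (T : Cluster S) : Form.B φ ∈ T.1 ↔ Form.B φ ∈ S := by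
  refine ⟨fun hT => ?_, fun hB => (K_mem_iff hS).1 (hS.mem_of_KBeq_imp (KBeq.ap φ) hB) T⟩
  by_contra hB
  have hKneg := hS.mem_of_KBeq_imp (KBeq.an φ) ((hS.neg_iff _).2 hB)
  exact (T.2.1.neg_iff _).1 ((K_mem_iff hS).1 hKneg T) hT

theorem B_mem_mono (hS : IsMCS S) (h : ∀ T : Cluster S, φ ∈ T.1 → ψ ∈ T.1)
    (hB : Form.B φ ∈ S) : Form.B ψ ∈ S :=
  hS.mp (hS.mem_of_KBeq_imp (KBeq.kbm φ ψ)
    ((K_mem_iff hS).2 fun T => (T.2.1.imp_iff φ ψ).2 (h T))) hB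

end Cluster

/-- The propositional letters that occur in a formula. -/
def Form.letters {A : Type} : Form A → Set A
  | Form.top => ∅
  | Form.atom p => {p}
  | Form.neg φ => φ.letters
  | Form.and φ ψ => φ.letters ∪ ψ.letters
  | Form.K φ => φ.letters
  | Form.B φ => φ.letters

theorem Form.finite_letters {A : Type} (φ : Form A) : φ.letters.Finite := by
  induction φ with
  | top => exact Set.finite_empty
  | atom p => exact Set.finite_singleton p
  | neg _ ih | K _ ih | B _ ih => exact ih
  | and _ _ ihφ ihψ => exact ihφ.union ihψ

/-- The traces on a set `F` of letters of the maximal consistent sets in the cluster of `S`. Since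
formulas `Kχ` and `Bχ` are constant on a cluster, letters alone separate its relevant members. -/
def World {A : Type} (S : Set (Form A)) (F : Set A) : Type :=
  Set.range fun T : Cluster S => {p ∈ F | Form.atom p ∈ T.1}

section FiniteModel

variable {A : Type} {S : Set (Form A)} {F : Set A}

theorem finite_world (S : Set (Form A)) (hF : F.Finite) : Finite (World S F) :=
  (hF.finite_subsets.subset (by rintro _ ⟨T, rfl⟩; exact Set.sep_subset F _)).to_subtype

/-- The world of the finite model in which the letters of `F` have the same truth values as in
a given maximal consistent set. -/
def Cluster.toWorld (F : Set A) : Cluster S → World S F :=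
  Set.rangeFactorization _

theorem Cluster.toWorld_surjective : Function.Surjective (toWorld F : Cluster S → World S F) :=
  Set.rangeFactorization_surjective

theorem Cluster.toWorld_eq_iff {T : Cluster S} {w : World S F} :
    T.toWorld F = w ↔ ∀ p ∈ F, (Form.atom p ∈ T.1 ↔ p ∈ w.1) := by
  obtain ⟨_, T', rfl⟩ := w
  exact Subtype.ext_iff.trans (by simp +contextual [toWorld, Set.rangeFactorization, Set.ext_iff])

/-- `ψ` defines `X`: the members of the cluster that contain `ψ` are those whose world lies
in `X`. -/
def Defines (S : Set (Form A)) (ψ : Form A) (X : Set (World S F)) : Prop :=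
  ∀ T : Cluster S, ψ ∈ T.1 ↔ T.toWorld F ∈ X

/-- The propositions to which `S` assigns belief. -/
def believed (S : Set (Form A)) (F : Set A) : Set (Set (World S F)) :=
  {X | ∃ ψ, Defines S ψ X ∧ Form.B ψ ∈ S}

theorem Defines.mem_believed_iff (hS : IsMCS S) {ψ : Form A} {X : Set (World S F)}
    (hψ : Defines S ψ X) : X ∈ believed S F ↔ Form.B ψ ∈ S := by
  refine ⟨fun ⟨χ, hχ, hB⟩ => Cluster.B_mem_mono hS (fun T hT => ?_) hB, fun hB => ⟨ψ, hψ, hB⟩⟩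
  exact (hψ T).2 ((hχ T).1 hT)

theorem Defines.neg {ψ : Form A} {X : Set (World S F)} (hψ : Defines S ψ X) :
    Defines S (Form.neg ψ) Xᶜ := fun T =>
  (T.2.1.neg_iff ψ).trans (hψ T).not

theorem Defines.or {ψ χ : Form A} {X Y : Set (World S F)} (hψ : Defines S ψ X)
    (hχ : Defines S χ Y) : Defines S (Form.or ψ χ) (X ∪ Y) := fun T =>
  (T.2.1.or_iff ψ χ).trans (or_congr (hψ T) (hχ T))

theorem exists_defines (hF : F.Finite) (X : Set (World S F)) : ∃ ψ, Defines S ψ X := by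
  have := hF.to_subtype
  have := finite_world S hF
  choose χ hχ using fun w : World S F => Form.exists_conj fun p : F =>
    if p.1 ∈ w.1 then Form.atom p.1 else Form.neg (Form.atom p.1)
  obtain ⟨ψ, hψ⟩ := Form.exists_disj fun w : X => χ w
  refine ⟨ψ, fun T => ?_⟩
  simp [hψ _ T.2.1.toIsTruthPredicate, hχ _ _ T.2.1.toIsTruthPredicate, T.2.1.ite_neg_iff,
    ← Cluster.toWorld_eq_iff]

end FiniteModel

section Belief

variable {A : Type} {S : Set (Form A)} {F : Set A}

theorem compl_notMem_believed (hS : IsMCS S) (hF : F.Finite) {X : Set (World S F)}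
    (hX : X ∈ believed S F) : Xᶜ ∉ believed S F := by
  obtain ⟨φ, hφ⟩ := exists_defines hF X
  rw [hφ.mem_believed_iff hS] at hX
  rw [hφ.neg.mem_believed_iff hS]
  exact (hS.neg_iff _).1 (hS.mem_of_KBeq_imp (KBeq.dax φ) hX)

theorem union_mem_believed (hS : IsMCS S) (hF : F.Finite) {X Y : Set (World S F)}
    (hX : Xᶜ ∉ believed S F) (hY : (Y \ X).Nonempty) : X ∪ Y ∈ believed S F := by
  obtain ⟨φ, hφ⟩ := exists_defines hF X
  obtain ⟨ψ, hψ⟩ := exists_defines hF Y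
  obtain ⟨w, hwY, hwX⟩ := hY
  obtain ⟨T, rfl⟩ := Cluster.toWorld_surjective w
  rw [hφ.neg.mem_believed_iff hS] at hX
  rw [(hφ.or hψ).mem_believed_iff hS]
  refine hS.mem_of_KBeq_imp (KBeq.scax φ ψ) ((hS.and_iff _ _).2 ⟨(hS.neg_iff _).2 hX, ?_⟩)
  rw [hS.neg_iff, Cluster.K_mem_iff hS]
  intro h
  refine (T.2.1.neg_iff _).1 (h T) ((T.2.1.and_iff _ _).2 ⟨?_, (hψ T).2 hwY⟩)
  exact (T.2.1.neg_iff φ).2 fun hT => hwX ((hφ T).1 hT)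

theorem exists_mem_believed_of_card_le (hS : IsMCS S) (hF : F.Finite) {m : ℕ}
    {X Y : Fin (m + 1) → Set (World S F)}
    (hcard : ∀ w, (Finset.univ.filter fun i => w ∈ X i).card ≤
      (Finset.univ.filter fun i => w ∈ Y i).card)
    (hzero : X 0 ∈ believed S F) (hsucc : ∀ i : Fin m, (X i.succ)ᶜ ∉ believed S F) :
    ∃ i, Y i ∈ believed S F := by
  choose φ hφ using fun i => exists_defines hF (X i)
  choose ψ hψ using fun i => exists_defines hF (Y i)
  simp only [(hψ _).mem_believed_iff hS]
  simp only [(hφ _).mem_believed_iff hS] at hzero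
  simp only [(hφ _).neg.mem_believed_iff hS] at hsucc
  have hseg : segI φ ψ ∈ S := (Cluster.K_mem_iff hS).2 fun T => by
    rw [T.2.1.bigOr_segF_iff]
    simpa only [hφ _ T, hψ _ T] using hcard (T.toWorld F)
  have hscott := (hS.imp_iff _ _).1 (hS.mem_of_KBeq (KBeq.scott m φ ψ))
  simp only [hS.and_iff, hS.bigAnd_iff, hS.bigOr_iff, hS.neg_iff, List.mem_ofFn,
    exists_exists_eq_and, forall_exists_index, forall_apply_eq_imp_iff] at hscott
  exact hscott ⟨hseg, hzero, hsucc⟩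

theorem isMajority_believed (hS : IsMCS S) (hF : F.Finite) : IsMajority (believed S F) where
  compl_notMem _ := compl_notMem_believed hS hF
  insert_mem X x hX hx := by
    rw [← Set.union_singleton]
    exact union_mem_believed hS hF hX ⟨x, rfl, hx⟩
  scott _ _ _ := exists_mem_believed_of_card_le hS hF

end Belief

/-- The model in which all worlds are indistinguishable and `P` is given by point weights. -/
noncomputable def EPM.ofWeights {W A : Type} [Fintype W] [Nonempty W] (V : W → Set A)
    (p : W → ℝ) (hp : ∀ w, 0 < p w) (hsum : ∑ w, p w = 1) : EPM W A where
  finite := inferInstance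
  nonempty := inferInstance
  R _ _ := True
  equiv := ⟨fun _ => trivial, fun _ => trivial, fun _ _ => trivial⟩
  V := V
  P X := ∑ w with w ∈ X, p w
  nonneg _ := Finset.sum_nonneg fun w _ => (hp w).le
  le_one _ := hsum ▸ Finset.sum_le_univ_sum_of_nonneg fun w => (hp w).le
  norm := by simpa using hsum
  add X Y hXY := by
    simp only [Set.mem_union, Finset.filter_or]
    exact Finset.sum_union (Finset.disjoint_filter.2 fun w _ hX hY =>
      Set.notMem_empty w (hXY ▸ ⟨hX, hY⟩))
  full w := Finset.sum_pos (fun v _ => hp v) ⟨w, by simp⟩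

theorem EPM.Pw_ofWeights {W A : Type} [Fintype W] [Nonempty W] (V : W → Set A) (p : W → ℝ)
    (hp : ∀ w, 0 < p w) (hsum : ∑ w, p w = 1) (w : W) (X : Set W) :
    (ofWeights V p hp hsum).Pw w X = ∑ v with v ∈ X, p v := by
  simp [Pw, cl, ofWeights, hsum]

section Completeness

variable {A : Type} {S : Set (Form A)} {F : Set A}

theorem defines_psem (hS : IsMCS S) {c : ℝ} {M : EPM (World S F) A} (hR : ∀ w v, M.R w v)
    (hV : ∀ w, M.V w = w.1) (hP : ∀ w X, c < M.Pw w X ↔ X ∈ believed S F) {φ : Form A}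
    (hφ : φ.letters ⊆ F) : Defines S φ (psem c M φ) := by
  induction φ with
  | top => exact fun T => iff_of_true T.2.1.top (Set.mem_univ _)
  | atom p =>
    intro T
    have hp : p ∈ F := hφ rfl
    simpa [psem, hV] using (Cluster.toWorld_eq_iff.1 (Eq.refl (T.toWorld F))) p hp
  | neg φ ih => exact (ih hφ).neg
  | and φ ψ ihφ ihψ =>
    obtain ⟨hφ, hψ⟩ := Set.union_subset_iff.1 hφ
    exact fun T => (T.2.1.and_iff φ ψ).trans (and_congr (ihφ hφ T) (ihψ hψ T))
  | K φ ih =>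
    intro T
    rw [T.2.2, Cluster.K_mem_iff hS, mem_psem_K]
    simp only [hR, true_imp_iff, ← Cluster.toWorld_surjective.forall, ih hφ _]
  | B φ ih =>
    intro T
    rw [Cluster.B_mem_iff hS, mem_psem_B, hP, (ih hφ).mem_believed_iff hS]

theorem exists_notMem_psem {φ : Form A} (hφ : ¬ KBeq φ) :
    ∃ (W : Type) (M : EPM W A) (w : W), w ∉ psem (1 / 2) M φ := by
  obtain ⟨S, hS, -, hφS⟩ := lindenbaum fun h : Derivable ∅ φ => hφ h.KBeq_of_empty
  let S₀ : Cluster S := ⟨S, hS, fun _ => Iff.rfl⟩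
  let w₀ := S₀.toWorld φ.letters
  have := finite_world S φ.finite_letters
  have := Fintype.ofFinite (World S φ.letters)
  have : Nonempty (World S φ.letters) := ⟨w₀⟩
  obtain ⟨p, hp, hsum, hmem⟩ := (isMajority_believed hS φ.finite_letters).exists_weights
  let M : EPM (World S φ.letters) A := EPM.ofWeights (fun w => w.1) (fun w => p w)
    (fun w => Rat.cast_pos.2 (hp w)) (by exact_mod_cast hsum)
  have hP : ∀ w X, 1 / 2 < M.Pw w X ↔ X ∈ believed S φ.letters := fun w X => by
    simp [M, EPM.Pw_ofWeights, hmem, ← Rat.cast_lt (K := ℝ)]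
  have hdef := defines_psem hS (fun _ _ => trivial) (fun _ => rfl) hP subset_rfl
  exact ⟨_, M, w₀, fun h => hφS ((hdef S₀).2 h)⟩

end Completeness

/-- `KBeq` is sound and complete for threshold `1/2` with respect to the class of
epistemic probability models. -/
theorem KBeq_probability_soundness_completeness {A : Type} (φ : Form A) :
    KBeq φ ↔ ∀ (W : Type) (M : EPM W A) (w : W), w ∈ psem (1/2 : ℝ) M φ := by
  refine ⟨fun h _ M w => h.mem_psem M w, fun h => ?_⟩
  by_contra hφ
  obtain ⟨W, M, w, hw⟩ := exists_notMem_psem hφ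
  exact hw (h W M w)
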